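/- Let λ = (λ₁, …, λₙ) be an n-tuple of positive integers, let i ∈ {1, …, n} and let ℓᵢ = lcm(λ₁, …, λ_{i−1}, λ_{i+1}, …, λₙ). Then μ_norm(Δ(λ₁, …, λₙ)) = μ_norm(Δ(λ₁, …, λ_{i−1}, λᵢ + ℓᵢ, λ_{i+1}, …, λₙ)). -/

import Mathlib

/-- A point of `ℝⁿ` is a lattice point if all its coordinates are integers. -/
def IsLatticePoint {n : ℕ} (x : Fin n → ℝ) : Prop := ∀ i, ∃ z : ℤ, x i = (z : ℝ)

/-- The `k`-th dilation `kS = {k • x : x ∈ S}` of a set `S ⊆ ℝⁿ`. -/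
def dilate {n : ℕ} (k : ℕ) (P : Set (Fin n → ℝ)) : Set (Fin n → ℝ) :=
  (fun x => (k : ℝ) • x) '' P

/-- Every lattice point of `kP` is a sum of `k` lattice points of `P`. -/
def IsIDP {n : ℕ} (k : ℕ) (P : Set (Fin n → ℝ)) : Prop :=
  ∀ x ∈ dilate k P, IsLatticePoint x →
    ∃ f : Fin k → (Fin n → ℝ), (∀ i, f i ∈ P ∧ IsLatticePoint (f i)) ∧ x = ∑ i, f i

/-- A polytope is normal if for every `k ≥ 1` every lattice point of `kP`
is a sum of `k` lattice points of `P`. -/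
def IsNormal {n : ℕ} (P : Set (Fin n → ℝ)) : Prop := ∀ k : ℕ, 1 ≤ k → IsIDP k P

/-- A polytope is very ample if there is `k₀` such that for every `k ≥ k₀` every
lattice point of `kP` is a sum of `k` lattice points of `P`. -/
def IsVeryAmple {n : ℕ} (P : Set (Fin n → ℝ)) : Prop :=
  ∃ k₀ : ℕ, ∀ k : ℕ, k₀ ≤ k → IsIDP k P

/-- The rectangular simplex `Δ(λ) = conv{0, λ₁e₁, …, λₙeₙ}`. -/
def rectSimplex {n : ℕ} (lam : Fin n → ℕ) : Set (Fin n → ℝ) :=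
  convexHull ℝ (insert 0 (Set.range fun i => Pi.single i ((lam i : ℝ))))

/-- An edge of `P`: a segment between two distinct extreme points of `P`
which is an extreme subset of `P`. -/
def IsEdge {n : ℕ} (P : Set (Fin n → ℝ)) (v w : Fin n → ℝ) : Prop :=
  v ≠ w ∧ v ∈ P.extremePoints ℝ ∧ w ∈ P.extremePoints ℝ ∧
    IsExtreme ℝ P (segment ℝ v w)

/-- `P` has at least `k` lattice points on every edge. -/
def LPE {n : ℕ} (k : ℕ) (P : Set (Fin n → ℝ)) : Prop :=
  ∀ v w, IsEdge P v w →
    ∃ S : Finset (Fin n → ℝ), k ≤ S.card ∧ ∀ x ∈ S, x ∈ segment ℝ v w ∧ IsLatticePoint x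

/-- The normality index: the least `k₀` such that `kP` is normal for all `k ≥ k₀`. -/
noncomputable def munorm {n : ℕ} (P : Set (Fin n → ℝ)) : ℕ :=
  sInf {k₀ : ℕ | ∀ k : ℕ, k₀ ≤ k → IsNormal (dilate k P)}

/-- Almost 1-normality: with `L = lcm λᵢ`, `Lᵢ = L/λᵢ`, `d = gcd Lᵢ`, the number
`L - d` lies in the additive submonoid of `ℕ` generated by the `Lᵢ`. -/
def IsA1N {n : ℕ} (lam : Fin n → ℕ) : Prop :=
  Finset.univ.lcm lam - Finset.univ.gcd (fun i => Finset.univ.lcm lam / lam i) ∈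
    AddSubmonoid.closure (Set.range fun i => Finset.univ.lcm lam / lam i)

theorem aux_split {r : ℕ} (t : Fin r → ℕ) (a : ℕ) (h : a ≤ ∑ s, t s) :
    ∃ g : Fin r → ℕ, (∀ s, g s ≤ t s) ∧ ∑ s, g s = a := by
  induction r generalizing a with
  | zero => exact ⟨t, fun s => le_rfl, by simp at h ⊢; omega⟩
  | succ r ih =>
    rw [Fin.sum_univ_succ] at h
    obtain ⟨g, hg, hs⟩ := ih (fun s => t s.succ) (a - min a (t 0)) (by omega)
    refine ⟨Fin.cons (min a (t 0)) g, ?_, ?_⟩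
    · intro s
      refine Fin.cases ?_ ?_ s
      · simp
      · intro s; simpa using hg s
    · rw [Fin.sum_univ_succ]
      simp only [Fin.cons_zero, Fin.cons_succ, hs]
      omega

/-- weight of the coordinates other than `i` -/
def auxW {n : ℕ} (c : Fin n → ℕ) (i : Fin n) (x : Fin n → ℕ) : ℕ :=
  ∑ j ∈ Finset.univ.erase i, c j * x j

theorem auxW_congr {n : ℕ} (c : Fin n → ℕ) (i : Fin n) (x y : Fin n → ℕ)
    (h : ∀ j, j ≠ i → x j = y j) : auxW c i x = auxW c i y := by
  unfold auxW
  refine Finset.sum_congr rfl fun j hj => ?_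
  rw [h j (Finset.ne_of_mem_erase hj)]

theorem auxW_sum {n r : ℕ} (c : Fin n → ℕ) (i : Fin n) (x : Fin n → ℕ)
    (f : Fin r → Fin n → ℕ)
    (h : ∀ j, j ≠ i → x j = ∑ s, f s j) : auxW c i x = ∑ s, auxW c i (f s) := by
  unfold auxW
  rw [Finset.sum_comm]
  refine Finset.sum_congr rfl fun j hj => ?_
  rw [h j (Finset.ne_of_mem_erase hj), Finset.mul_sum]

def auxA {n : ℕ} (L : ℕ) (c : Fin n → ℕ) (i : Fin n) (m r : ℕ) : Prop :=
  ∀ x : Fin n → ℕ, m * auxW c i x + L * x i ≤ m * (r * L) →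
    ∃ f : Fin r → Fin n → ℕ, (∀ s, m * auxW c i (f s) + L * f s i ≤ m * L) ∧
      ∀ j, x j = ∑ s, f s j

def auxC {n : ℕ} (L : ℕ) (c : Fin n → ℕ) (i : Fin n) (m r : ℕ) : Prop :=
  ∀ x : Fin n → ℕ, auxW c i x ≤ r * L →
    ∃ f : Fin r → Fin n → ℕ, (∀ j, j ≠ i → x j = ∑ s, f s j) ∧
      (∀ s, auxW c i (f s) ≤ L) ∧
      m * (r * L - auxW c i x) / L ≤ ∑ s, m * (L - auxW c i (f s)) / L

theorem aux_key (m w L a R : ℕ) (hm : 0 < m) (hL : 0 < L) :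
    m * w + L * a ≤ m * R ↔ w ≤ R ∧ a ≤ m * (R - w) / L := by
  rw [Nat.le_div_iff_mul_le hL]
  constructor
  · intro h
    have h1 : w ≤ R := by
      have : m * w ≤ m * R := by omega
      exact Nat.le_of_mul_le_mul_left this hm
    refine ⟨h1, ?_⟩
    obtain ⟨d, rfl⟩ := Nat.exists_eq_add_of_le h1
    rw [Nat.add_sub_cancel_left]
    rw [mul_add] at h
    linarith
  · rintro ⟨h1, h2⟩
    obtain ⟨d, rfl⟩ := Nat.exists_eq_add_of_le h1
    rw [Nat.add_sub_cancel_left] at h2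
    rw [mul_add]
    linarith

theorem auxA_iff_auxC {n : ℕ} (L : ℕ) (c : Fin n → ℕ) (i : Fin n) (m r : ℕ)
    (hm : 0 < m) (hL : 0 < L) : auxA L c i m r ↔ auxC L c i m r := by
  constructor
  · intro h x hx
    have hW : auxW c i (Function.update x i (m * (r * L - auxW c i x) / L)) = auxW c i x :=
      auxW_congr _ _ _ _ fun j hj => Function.update_of_ne hj _ _
    obtain ⟨f, hf, hs⟩ := h (Function.update x i (m * (r * L - auxW c i x) / L)) (by
      rw [hW, Function.update_self, aux_key _ _ _ _ _ hm hL]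
      exact ⟨hx, le_rfl⟩)
    refine ⟨f, ?_, ?_, ?_⟩
    · intro j hj
      rw [← hs j, Function.update_of_ne hj]
    · intro s
      exact ((aux_key _ _ _ _ _ hm hL).1 (hf s)).1
    · have := hs i
      rw [Function.update_self] at this
      rw [this]
      exact Finset.sum_le_sum fun s _ => ((aux_key _ _ _ _ _ hm hL).1 (hf s)).2
  · intro h x hx
    rw [aux_key _ _ _ _ _ hm hL] at hx
    obtain ⟨f, hf, hw, hs⟩ := h x hx.1
    obtain ⟨g, hg, hgs⟩ := aux_split _ (x i) (hx.2.trans hs)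
    have hW : ∀ s, auxW c i (Function.update (f s) i (g s)) = auxW c i (f s) := fun s =>
      auxW_congr _ _ _ _ fun j hj => Function.update_of_ne hj _ _
    refine ⟨fun s => Function.update (f s) i (g s), ?_, ?_⟩
    · intro s
      show m * auxW c i (Function.update (f s) i (g s)) + L * Function.update (f s) i (g s) i ≤ m * L
      rw [hW, Function.update_self, aux_key _ _ _ _ _ hm hL]
      exact ⟨hw s, hg s⟩
    · intro j
      by_cases hj : j = i
      · subst hj
        simp [hgs]
      · simp only [Function.update_of_ne hj]
        exact hf j hj

theorem auxC_shift {n : ℕ} (L : ℕ) (c : Fin n → ℕ) (i : Fin n) (m r : ℕ)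
    (hL : 0 < L) : auxC L c i (m + L) r ↔ auxC L c i m r := by
  unfold auxC
  refine forall_congr' fun x => forall_congr' fun hx => exists_congr fun f =>
    and_congr_right fun hf => and_congr_right fun hw => ?_
  have e : ∀ d, (m + L) * d / L = m * d / L + d := fun d => by
    rw [add_mul, Nat.add_mul_div_left _ _ hL]
  simp only [e, Finset.sum_add_distrib]
  have hsum : ∑ s, (L - auxW c i (f s)) = r * L - auxW c i x := by
    have : ∑ s, (L - auxW c i (f s)) + ∑ s, auxW c i (f s) = r * L := by
      rw [← Finset.sum_add_distrib]
      simp [Nat.sub_add_cancel (hw _)]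
    rw [auxW_sum c i x f hf]
    omega
  rw [hsum]
  omega

theorem mem_rectSimplex_iff {n : ℕ} (lam : Fin n → ℕ) (hlam : ∀ i, 0 < lam i)
    (x : Fin n → ℝ) :
    x ∈ rectSimplex lam ↔ (∀ j, 0 ≤ x j) ∧ ∑ j, x j / lam j ≤ 1 := by
  have hp : ∀ j, (0 : ℝ) < lam j := fun j => by exact_mod_cast hlam j
  constructor
  · intro hx
    have hsub : rectSimplex lam ⊆ {x | (∀ j, 0 ≤ x j) ∧ ∑ j, x j / lam j ≤ 1} := by
      refine convexHull_min ?_ ?_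
      · intro y hy
        rcases hy with rfl | ⟨j, rfl⟩
        · simp
        · refine ⟨fun k => ?_, ?_⟩
          · by_cases h : k = j
            · subst h; simp
            · simp [Pi.single_eq_of_ne h]
          · rw [Finset.sum_eq_single j]
            · simp [(hp j).ne']
            · intro k _ h
              simp [Pi.single_eq_of_ne h]
            · simp
      · intro y hy z hz a b ha hb hab
        refine ⟨fun j => ?_, ?_⟩
        · have := mul_nonneg ha (hy.1 j)
          have := mul_nonneg hb (hz.1 j)
          simp only [Pi.add_apply, Pi.smul_apply, smul_eq_mul]
          linarith
        · have : ∑ j, (a • y + b • z) j / (lam j : ℝ)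
              = a * ∑ j, y j / lam j + b * ∑ j, z j / lam j := by
            rw [Finset.mul_sum, Finset.mul_sum, ← Finset.sum_add_distrib]
            refine Finset.sum_congr rfl fun j _ => ?_
            simp only [Pi.add_apply, Pi.smul_apply, smul_eq_mul]
            ring
          rw [this]
          have h1 := mul_le_mul_of_nonneg_left hy.2 ha
          have h2 := mul_le_mul_of_nonneg_left hz.2 hb
          linarith
    exact hsub hx
  · rintro ⟨h0, h1⟩
    have hc : Convex ℝ (rectSimplex lam) := convex_convexHull ℝ _
    have key := hc.sum_mem (t := Finset.univ)
      (w := fun o : Option (Fin n) => o.elim (1 - ∑ j, x j / lam j) (fun j => x j / lam j))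
      (z := fun o : Option (Fin n) => o.elim 0 (fun j => Pi.single j (lam j : ℝ))) ?_ ?_ ?_
    · rw [Fintype.sum_option] at key
      simp only [Option.elim, smul_zero, zero_add] at key
      convert key using 1
      ext k
      rw [Finset.sum_apply, Finset.sum_eq_single k]
      · simp [(hp k).ne']
      · intro j _ h
        simp [Pi.single_eq_of_ne h.symm]
      · simp
    · rintro (_ | j) _
      · simpa using h1
      · exact div_nonneg (h0 j) (hp j).le
    · rw [Fintype.sum_option]; simp
    · rintro (_ | j) _
      · exact subset_convexHull ℝ _ (Set.mem_insert _ _)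
      · exact subset_convexHull ℝ _ (Set.mem_insert_of_mem _ ⟨j, rfl⟩)

theorem mem_dilate_iff {n : ℕ} (lam : Fin n → ℕ) (hlam : ∀ i, 0 < lam i)
    (k : ℕ) (hk : 0 < k) (x : Fin n → ℝ) :
    x ∈ dilate k (rectSimplex lam) ↔ (∀ j, 0 ≤ x j) ∧ ∑ j, x j / lam j ≤ k := by
  have hk' : (0 : ℝ) < k := by exact_mod_cast hk
  constructor
  · rintro ⟨y, hy, rfl⟩
    rw [mem_rectSimplex_iff lam hlam] at hy
    refine ⟨fun j => mul_nonneg hk'.le (hy.1 j), ?_⟩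
    have : ∑ j, ((k : ℝ) • y) j / (lam j : ℝ) = k * ∑ j, y j / lam j := by
      rw [Finset.mul_sum]
      exact Finset.sum_congr rfl fun j _ => by
        simp only [Pi.smul_apply, smul_eq_mul]; ring
    simp only [this]
    nlinarith [hy.2]
  · rintro ⟨h0, h1⟩
    refine ⟨(k : ℝ)⁻¹ • x, ?_, ?_⟩
    · rw [mem_rectSimplex_iff lam hlam]
      refine ⟨fun j => mul_nonneg (inv_nonneg.2 hk'.le) (h0 j), ?_⟩
      have : ∑ j, ((k : ℝ)⁻¹ • x) j / (lam j : ℝ) = (k : ℝ)⁻¹ * ∑ j, x j / lam j := by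
        rw [Finset.mul_sum]
        exact Finset.sum_congr rfl fun j _ => by
          simp only [Pi.smul_apply, smul_eq_mul]; ring
      rw [this, inv_mul_le_iff₀ hk']
      simpa using h1
    · simp [smul_smul, hk'.ne']

theorem dilate_eq {n : ℕ} (lam : Fin n → ℕ) (hlam : ∀ i, 0 < lam i)
    (k : ℕ) (hk : 0 < k) :
    dilate k (rectSimplex lam) = rectSimplex (fun j => k * lam j) := by
  have hk' : (0 : ℝ) < k := by exact_mod_cast hk
  ext x
  rw [mem_dilate_iff lam hlam k hk,
    mem_rectSimplex_iff _ (fun j => Nat.mul_pos hk (hlam j))]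
  refine and_congr_right fun _ => ?_
  have : ∑ j, x j / ((k * lam j : ℕ) : ℝ) = (k : ℝ)⁻¹ * ∑ j, x j / lam j := by
    rw [Finset.mul_sum]
    refine Finset.sum_congr rfl fun j _ => ?_
    push_cast
    rw [div_mul_eq_div_div, div_right_comm, div_eq_inv_mul _ (k : ℝ)]
  rw [this, inv_mul_le_iff₀ hk', mul_one]

theorem aux_weight {n : ℕ} (lam : Fin n → ℕ) (hlam : ∀ i, 0 < lam i) (i : Fin n)
    (L : ℕ) (hL : 0 < L) (hdvd : ∀ j, j ≠ i → lam j ∣ L) (r : ℕ) (x : Fin n → ℕ) :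
    ∑ j, (x j : ℝ) / lam j ≤ r ↔
      lam i * auxW (fun j => L / lam j) i x + L * x i ≤ lam i * (r * L) := by
  have hp : ∀ j, (0 : ℝ) < lam j := fun j => by exact_mod_cast hlam j
  have hL' : (0 : ℝ) < L := by exact_mod_cast hL
  have hw : ((auxW (fun j => L / lam j) i x : ℕ) : ℝ)
      = L * ∑ j ∈ Finset.univ.erase i, (x j : ℝ) / lam j := by
    unfold auxW
    push_cast
    rw [Finset.mul_sum]
    refine Finset.sum_congr rfl fun j hj => ?_
    rw [Nat.cast_div (hdvd j (Finset.ne_of_mem_erase hj)) (hp j).ne']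
    ring
  rw [← Nat.cast_le (α := ℝ)]
  push_cast
  rw [hw, ← Finset.add_sum_erase _ _ (Finset.mem_univ i)]
  set S := ∑ j ∈ Finset.univ.erase i, (x j : ℝ) / lam j
  have h1 : (lam i : ℝ) * (L * S) + L * x i = (lam i * L) * (x i / lam i + S) := by
    have := (hp i).ne'
    field_simp
    ring
  rw [h1, show (lam i : ℝ) * (r * L) = (lam i * L) * r by ring,
    mul_le_mul_iff_right₀ (mul_pos (hp i) hL')]

theorem aux_lattice {n : ℕ} (x : Fin n → ℝ) (h0 : ∀ j, 0 ≤ x j) (hx : IsLatticePoint x) :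
    ∃ y : Fin n → ℕ, x = fun j => (y j : ℝ) := by
  choose z hz using hx
  refine ⟨fun j => (z j).toNat, funext fun j => ?_⟩
  have h : 0 ≤ z j := by
    have := h0 j
    rw [hz j] at this
    exact_mod_cast this
  rw [hz j]
  exact_mod_cast (Int.toNat_of_nonneg h).symm

theorem isIDP_iff {n : ℕ} (lam : Fin n → ℕ) (hlam : ∀ i, 0 < lam i) (i : Fin n)
    (L : ℕ) (hL : 0 < L) (hdvd : ∀ j, j ≠ i → lam j ∣ L) (r : ℕ) (hr : 0 < r) :
    IsIDP r (rectSimplex lam) ↔ auxA L (fun j => L / lam j) i (lam i) r := by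
  have hw := aux_weight lam hlam i L hL hdvd
  constructor
  · intro h x hx
    rw [← hw] at hx
    obtain ⟨f, hf, hs⟩ := h (fun j => (x j : ℝ))
      ((mem_dilate_iff lam hlam r hr _).2 ⟨fun j => Nat.cast_nonneg _, hx⟩)
      (fun j => ⟨x j, by simp⟩)
    have hf1 := fun s => (mem_rectSimplex_iff lam hlam _).1 (hf s).1
    choose g hg using fun s => aux_lattice (f s) (hf1 s).1 (hf s).2
    refine ⟨g, fun s => ?_, fun j => ?_⟩
    · have h2 := (hf1 s).2
      rw [hg s] at h2
      have := (hw 1 (g s)).1 (by simpa using h2)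
      simpa using this
    · have := congrFun hs j
      rw [Finset.sum_apply] at this
      simp only [hg] at this
      exact_mod_cast this
  · intro h x hx hl
    rw [mem_dilate_iff lam hlam r hr] at hx
    obtain ⟨y, rfl⟩ := aux_lattice x hx.1 hl
    obtain ⟨f, hf, hs⟩ := h y ((hw r y).1 hx.2)
    refine ⟨fun s j => (f s j : ℝ), fun s => ⟨?_, fun j => ⟨f s j, by simp⟩⟩, ?_⟩
    · rw [mem_rectSimplex_iff lam hlam]
      refine ⟨fun j => Nat.cast_nonneg _, ?_⟩
      have := (hw 1 (f s)).2 (by simpa using hf s)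
      simpa using this
    · ext j
      rw [Finset.sum_apply]
      exact_mod_cast hs j

theorem isNormal_shift {n : ℕ} (lam : Fin n → ℕ) (hlam : ∀ i, 0 < lam i) (i : Fin n)
    (L : ℕ) (hL : 0 < L) (hdvd : ∀ j, j ≠ i → lam j ∣ L) :
    IsNormal (rectSimplex lam) ↔
      IsNormal (rectSimplex (Function.update lam i (lam i + L))) := by
  have hlam' : ∀ j, 0 < Function.update lam i (lam i + L) j := by
    intro j
    by_cases h : j = i
    · subst h; simp [hL]
    · rw [Function.update_of_ne h]; exact hlam j
  refine forall_congr' fun r => forall_congr' fun hr => ?_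
  rw [isIDP_iff lam hlam i L hL hdvd r hr, isIDP_iff _ hlam' i L hL
    (fun j hj => by rw [Function.update_of_ne hj]; exact hdvd j hj) r hr,
    auxA_iff_auxC _ _ _ _ _ (hlam i) hL, auxA_iff_auxC _ _ _ _ _ (hlam' i) hL,
    Function.update_self, auxC_shift _ _ _ _ _ hL]
  have hW : ∀ x, auxW (fun j => L / Function.update lam i (lam i + L) j) i x
      = auxW (fun j => L / lam j) i x := by
    intro x
    unfold auxW
    refine Finset.sum_congr rfl fun j hj => ?_
    simp only [Function.update_of_ne (Finset.ne_of_mem_erase hj)]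
  unfold auxC
  simp only [hW]

/-- periodicity of the normality index. With
`ℓᵢ = lcm(λ₁, …, λ_{i-1}, λ_{i+1}, …, λₙ)`,
`μ_norm(Δ(λ)) = μ_norm(Δ(λ₁, …, λᵢ + ℓᵢ, …, λₙ))`. -/
theorem stmt_12 (n : ℕ) (lam : Fin n → ℕ) (hlam : ∀ i, 0 < lam i) (i : Fin n) :
    munorm (rectSimplex lam) =
      munorm (rectSimplex
        (Function.update lam i (lam i + (Finset.univ.erase i).lcm lam))) := by
  set L := (Finset.univ.erase i).lcm lam with hLdef
  have hL : 0 < L := by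
    refine Nat.pos_of_ne_zero fun h => ?_
    rw [hLdef, Finset.lcm_eq_zero_iff] at h
    obtain ⟨j, _, hj⟩ := h
    exact (hlam j).ne' hj
  have hdvd : ∀ j, j ≠ i → lam j ∣ L := fun j hj =>
    Finset.dvd_lcm (Finset.mem_erase.2 ⟨hj, Finset.mem_univ _⟩)
  have hlam' : ∀ j, 0 < Function.update lam i (lam i + L) j := by
    intro j
    by_cases h : j = i
    · subst h; simp [hL]
    · rw [Function.update_of_ne h]; exact hlam j
  have key : ∀ k, IsNormal (dilate k (rectSimplex lam)) ↔
      IsNormal (dilate k (rectSimplex (Function.update lam i (lam i + L)))) := by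
    intro k
    rcases Nat.eq_zero_or_pos k with rfl | hk
    · have hz : ∀ mu : Fin n → ℕ, dilate 0 (rectSimplex mu) = {0} := by
        intro mu
        have hne : (rectSimplex mu).Nonempty :=
          ⟨0, subset_convexHull ℝ _ (Set.mem_insert _ _)⟩
        unfold dilate
        simp only [Nat.cast_zero, zero_smul]
        exact hne.image_const 0
      rw [hz, hz]
    · rw [dilate_eq lam hlam k hk, dilate_eq _ hlam' k hk,
        isNormal_shift (fun j => k * lam j) (fun j => Nat.mul_pos hk (hlam j)) i (k * L)
          (Nat.mul_pos hk hL) (fun j hj => Nat.mul_dvd_mul_left k (hdvd j hj))]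
      have : Function.update (fun j => k * lam j) i (k * lam i + k * L)
          = fun j => k * Function.update lam i (lam i + L) j := by
        ext j
        by_cases h : j = i
        · subst h; simp [mul_add]
        · simp [Function.update_of_ne h]
      rw [this]
  unfold munorm
  simp only [key]
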